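/- Under assumption (B2), the inhomogeneous Martin kernel is determined by the homogeneous one: for all words v, w ∈ 𝒲 with v ≠ w, k(v,w) = k_hom(v,w)·R(v)·N^{−|v|}/(Σ_{v̂∼v} m(v̂)), and for v = w, k(v,v) = 1/m(v). -/

import Mathlib

open Classical

namespace Martin

/-- Finite words over the alphabet `Fin N` (the empty list is the empty word `∅`;
`w ++ [i]` is the word `wi` and `w.dropLast` is the parent `w⁻`). -/
abbrev Word (N : ℕ) := List (Fin N)

/-- The mass of a word: `m(w₁⋯wₙ) = m(w₁)⋯m(wₙ)`, `m(∅) = 1`. -/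
noncomputable def mW {N : ℕ} (m : Fin N → ℝ) (w : Word N) : ℝ := (w.map m).prod

/-- Total mass of the equivalence class of `v`: `Σ_{v̂ ∼ v} m(v̂)`. -/
noncomputable def massCl {N : ℕ} (sim : Word N → Word N → Prop) (m : Fin N → ℝ)
    (v : Word N) : ℝ :=
  ∑ᶠ u ∈ {u : Word N | sim u v}, mW m u

/-- Transition probability: `p(v,w) = m(w)/(Σ_{v̂∼v} m(v̂))` if `w = v̂i` for some
`v̂ ∼ v`, `i ∈ 𝒜`, and `0` otherwise. -/
noncomputable def pTrans {N : ℕ} (sim : Word N → Word N → Prop) (m : Fin N → ℝ)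
    (v w : Word N) : ℝ :=
  if ∃ v' : Word N, ∃ i : Fin N, sim v' v ∧ w = v' ++ [i] then mW m w / massCl sim m v
  else 0

/-- `n`-step transition probabilities: `p₀(v,w) = δ_v(w)`,
`pₙ(v,w) = Σ_u pₙ₋₁(v,u) p(u,w)`. -/
noncomputable def pn {N : ℕ} (sim : Word N → Word N → Prop) (m : Fin N → ℝ) :
    ℕ → Word N → Word N → ℝ
  | 0, v, w => if w = v then 1 else 0
  | n + 1, v, w => ∑ᶠ u : Word N, pn sim m n v u * pTrans sim m u w

/-- The Green function `g(v,w) = p_{|w|−|v|}(v,w)` (it equals `0` when `|w| < |v|`,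
by truncated subtraction and since then `v ≠ w`). -/
noncomputable def green {N : ℕ} (sim : Word N → Word N → Prop) (m : Fin N → ℝ)
    (v w : Word N) : ℝ :=
  pn sim m (w.length - v.length) v w

/-- The function `q(v,w) = g(v,w)·(Σ_{v̂∼v} m(v̂))/m(w)` for `v ≠ w`, `q(v,v) = 1`. -/
noncomputable def qfun {N : ℕ} (sim : Word N → Word N → Prop) (m : Fin N → ℝ)
    (v w : Word N) : ℝ :=
  if v = w then 1 else green sim m v w * massCl sim m v / mW m w

/-- The Martin kernel `k(v,w) = g(v,w)/g(∅,w)`. -/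
noncomputable def mkernel {N : ℕ} (sim : Word N → Word N → Prop) (m : Fin N → ℝ)
    (v w : Word N) : ℝ :=
  green sim m v w / green sim m [] w

/-- `R(w)`: the number of words equivalent to `w`. -/
noncomputable def Rnum {N : ℕ} (sim : Word N → Word N → Prop) (w : Word N) : ℕ :=
  Set.ncard {u : Word N | sim u w}

/-- Assumption (B2): for every word `w`, either all equivalent words have the same mass,
or all equivalent words have equivalent parents. -/
def B2 {N : ℕ} (sim : Word N → Word N → Prop) (m : Fin N → ℝ) : Prop :=
  ∀ w : Word N, (∀ w', sim w' w → mW m w' = mW m w) ∨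
    (∀ w', sim w' w → sim w'.dropLast w.dropLast)


lemma cls_fin {N : ℕ} {sim : Word N → Word N → Prop}
    (hlen : ∀ v w : Word N, sim v w → v.length = w.length) (w : Word N) :
    {u : Word N | sim u w}.Finite :=
  (List.finite_length_eq (Fin N) w.length).subset (fun _ hu => hlen _ _ hu)

lemma cls_eq {N : ℕ} {sim : Word N → Word N → Prop} (hsim : Equivalence sim)
    {u w : Word N} (h : sim u w) : {x : Word N | sim x u} = {x : Word N | sim x w} := by
  ext x
  exact ⟨fun hx => hsim.trans hx h, fun hx => hsim.trans hx (hsim.symm h)⟩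

lemma massCl_eq {N : ℕ} {sim : Word N → Word N → Prop}
    (hlen : ∀ v w : Word N, sim v w → v.length = w.length) (m : Fin N → ℝ) (w : Word N) :
    massCl sim m w = ∑ u ∈ (cls_fin hlen w).toFinset, mW m u := by
  unfold massCl
  exact finsum_mem_eq_finite_toFinset_sum _ _

lemma Rnum_eq {N : ℕ} {sim : Word N → Word N → Prop}
    (hlen : ∀ v w : Word N, sim v w → v.length = w.length) (w : Word N) :
    Rnum sim w = (cls_fin hlen w).toFinset.card := by
  unfold Rnum
  exact Set.ncard_eq_toFinset_card _ _

lemma mW_pos {N : ℕ} {m : Fin N → ℝ} (hm : ∀ a, 0 < m a) (w : Word N) : 0 < mW m w := by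
  unfold mW
  induction w with
  | nil => simp
  | cons a l ih => simpa using mul_pos (hm a) ih

lemma massCl_pos {N : ℕ} {sim : Word N → Word N → Prop} (hsim : Equivalence sim)
    (hlen : ∀ v w : Word N, sim v w → v.length = w.length) {m : Fin N → ℝ}
    (hm : ∀ a, 0 < m a) (w : Word N) : 0 < massCl sim m w := by
  rw [massCl_eq hlen]
  exact Finset.sum_pos (fun u _ => mW_pos hm u) ⟨w, by simpa using hsim.refl w⟩

lemma pTrans_nil {N : ℕ} (sim : Word N → Word N → Prop) (m : Fin N → ℝ) (u : Word N) :
    pTrans sim m u [] = 0 := by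
  simp [pTrans]

lemma pTrans_snoc {N : ℕ} {sim : Word N → Word N → Prop} (hsim : Equivalence sim)
    (m : Fin N → ℝ) (u w : Word N) (i : Fin N) :
    pTrans sim m u (w ++ [i]) =
      if sim u w then mW m (w ++ [i]) / massCl sim m w else 0 := by
  unfold pTrans
  by_cases h : sim u w
  · rw [if_pos ⟨w, i, hsim.symm h, rfl⟩, if_pos h]
    unfold massCl
    rw [cls_eq hsim h]
  · rw [if_neg h, if_neg]
    rintro ⟨v', j, h1, h2⟩
    have := (List.append_inj' h2 rfl).1
    subst this
    exact h (hsim.symm h1)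

lemma pn_nil {N : ℕ} (sim : Word N → Word N → Prop) (m : Fin N → ℝ) (n : ℕ) (v : Word N) :
    pn sim m (n + 1) v [] = 0 := by
  simp [pn, pTrans_nil]

lemma pn_snoc {N : ℕ} {sim : Word N → Word N → Prop} (hsim : Equivalence sim)
    (hlen : ∀ v w : Word N, sim v w → v.length = w.length)
    (m : Fin N → ℝ) (n : ℕ) (v w : Word N) (i : Fin N) :
    pn sim m (n + 1) v (w ++ [i]) =
      (∑ u ∈ (cls_fin hlen w).toFinset, pn sim m n v u) *
        (mW m (w ++ [i]) / massCl sim m w) := by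
  rw [pn, finsum_eq_sum_of_support_subset (s := (cls_fin hlen w).toFinset), Finset.sum_mul]
  · refine Finset.sum_congr rfl fun u hu => ?_
    have hu' : sim u w := by simpa using hu
    rw [pTrans_snoc hsim, if_pos hu']
  · intro u hu
    by_contra hc
    have hc' : ¬ sim u w := by simpa using hc
    apply hu
    simp [pTrans_snoc hsim, hc']

lemma pn_root {N : ℕ} {sim : Word N → Word N → Prop} (hsim : Equivalence sim)
    (hlen : ∀ v w : Word N, sim v w → v.length = w.length)
    {m : Fin N → ℝ} (hm : ∀ a, 0 < m a) (n : ℕ) :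
    ∀ w : Word N, w.length = n → pn sim m n [] w = mW m w := by
  induction n with
  | zero =>
    intro w hw
    obtain rfl := List.length_eq_zero_iff.1 hw
    simp [pn, mW]
  | succ n ih =>
    intro w hw
    rcases List.eq_nil_or_concat w with rfl | ⟨w', i, rfl⟩
    · simp at hw
    · simp at hw
      rw [List.concat_eq_append, pn_snoc hsim hlen, Finset.sum_congr rfl (g := fun u => mW m u), ← massCl_eq hlen]
      · have := massCl_pos hsim hlen hm w'
        field_simp
      · intro u hu
        have hu' : sim u w' := by simpa using hu
        exact ih u ((hlen _ _ hu').trans hw)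

/-- Mass-independent normalised Green function. -/
noncomputable def qn {N : ℕ} (sim : Word N → Word N → Prop) (v : Word N) : ℕ → Word N → ℝ
  | 0, w => if w = [] then 0 else if sim w.dropLast v then 1 else 0
  | n + 1, w => if w = [] then 0 else
      (∑ᶠ u ∈ {u : Word N | sim u w.dropLast}, qn sim v n u) / (Rnum sim w.dropLast : ℝ)

lemma qn_congr {N : ℕ} {sim : Word N → Word N → Prop} (hsim : Equivalence sim)
    (v : Word N) (n : ℕ) {u w : Word N} (hl : u.length = w.length)
    (h : sim u.dropLast w.dropLast) : qn sim v n u = qn sim v n w := by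
  have h0 : u = [] ↔ w = [] := by
    rw [← List.length_eq_zero_iff, ← List.length_eq_zero_iff, hl]
  cases n with
  | zero =>
    have : sim u.dropLast v ↔ sim w.dropLast v :=
      ⟨fun hx => hsim.trans (hsim.symm h) hx, fun hx => hsim.trans h hx⟩
    simp only [qn, h0, this]
  | succ n =>
    simp only [qn, h0, Rnum, cls_eq hsim h]

lemma key {N : ℕ} {sim : Word N → Word N → Prop} (hsim : Equivalence sim)
    (hlen : ∀ v w : Word N, sim v w → v.length = w.length)
    {m : Fin N → ℝ} (hB2 : B2 sim m) (v : Word N) (n : ℕ) (w : Word N) :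
    (∑ u ∈ (cls_fin hlen w).toFinset, qn sim v n u * mW m u) * (Rnum sim w : ℝ) =
      (∑ u ∈ (cls_fin hlen w).toFinset, qn sim v n u) * massCl sim m w := by
  rw [massCl_eq hlen, Rnum_eq hlen]
  rcases hB2 w with h | h
  · have h' : ∀ u ∈ (cls_fin hlen w).toFinset, mW m u = mW m w :=
      fun u hu => h u (by simpa using hu)
    rw [Finset.sum_congr rfl h', Finset.sum_congr rfl (fun u hu => by rw [h' u hu]),
      ← Finset.sum_mul, Finset.sum_const, nsmul_eq_mul]
    ring
  · have h' : ∀ u ∈ (cls_fin hlen w).toFinset, qn sim v n u = qn sim v n w := by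
      intro u hu
      have hu' : sim u w := by simpa using hu
      exact qn_congr hsim v n (hlen _ _ hu') (h u hu')
    rw [Finset.sum_congr rfl h', Finset.sum_congr rfl (fun u hu => by rw [h' u hu]),
      ← Finset.mul_sum, Finset.sum_const, nsmul_eq_mul]
    ring

lemma pn_qn {N : ℕ} {sim : Word N → Word N → Prop} (hsim : Equivalence sim)
    (hlen : ∀ v w : Word N, sim v w → v.length = w.length)
    {m : Fin N → ℝ} (hm : ∀ a, 0 < m a) (hB2 : B2 sim m) (v : Word N) (n : ℕ) :
    ∀ w : Word N, pn sim m (n + 1) v w = qn sim v n w * mW m w / massCl sim m v := by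
  induction n with
  | zero =>
    intro w
    rcases List.eq_nil_or_concat w with rfl | ⟨w', i, rfl⟩
    · simp [pn_nil, qn]
    · rw [List.concat_eq_append, pn_snoc hsim hlen]
      by_cases h : sim w' v
      · simp [pn, qn, h, hsim.refl v, massCl, cls_eq hsim h]
      · have h2 : ¬ sim v w' := fun hx => h (hsim.symm hx)
        simp [pn, qn, h, h2]
  | succ n ih =>
    intro w
    rcases List.eq_nil_or_concat w with rfl | ⟨w', i, rfl⟩
    · simp [pn_nil, qn]
    · rw [List.concat_eq_append, pn_snoc hsim hlen, Finset.sum_congr rfl (fun u _ => ih u), ← Finset.sum_div]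
      have hk := key hsim hlen hB2 v n w'
      have hR : (Rnum sim w' : ℝ) ≠ 0 := by
        rw [Rnum_eq hlen]
        have : 0 < (cls_fin hlen w').toFinset.card :=
          Finset.card_pos.2 ⟨w', by simpa using hsim.refl w'⟩
        positivity
      have h1 := (massCl_pos hsim hlen hm w').ne'
      have h2 := (massCl_pos hsim hlen hm v).ne'
      have hq : qn sim v (n + 1) (w' ++ [i]) =
          (∑ u ∈ (cls_fin hlen w').toFinset, qn sim v n u) / (Rnum sim w' : ℝ) := by
        rw [qn, if_neg (by simp), List.dropLast_concat,
          finsum_mem_eq_finite_toFinset_sum _ (cls_fin hlen w')]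
      rw [hq]
      field_simp
      linear_combination (mW m (w' ++ [i])) * hk

lemma mkernel_qn {N : ℕ} {sim : Word N → Word N → Prop} (hsim : Equivalence sim)
    (hlen : ∀ v w : Word N, sim v w → v.length = w.length)
    {m : Fin N → ℝ} (hm : ∀ a, 0 < m a) (hB2 : B2 sim m) (v w : Word N)
    (h : v.length < w.length) :
    mkernel sim m v w = qn sim v (w.length - v.length - 1) w / massCl sim m v := by
  have h1 := (mW_pos hm w).ne'
  have h2 := (massCl_pos hsim hlen hm v).ne'
  obtain ⟨k, hk⟩ : ∃ k, w.length - v.length = k + 1 := ⟨w.length - v.length - 1, by omega⟩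
  unfold mkernel green
  rw [pn_root hsim hlen hm _ w (by simp), hk, pn_qn hsim hlen hm hB2]
  simp only [Nat.add_sub_cancel]
  field_simp

lemma mW_hom {N : ℕ} (w : Word N) :
    mW (fun _ : Fin N => (N : ℝ)⁻¹) w = ((N : ℝ) ^ w.length)⁻¹ := by
  simp [mW]

/-- Theorem 4.3: under (B2) the inhomogeneous Martin kernel is
determined by the homogeneous one:
`k(v,w) = k_hom(v,w)·R(v)·N^{−|v|}/(Σ_{v̂∼v} m(v̂))` for `v ≠ w`, and
`k(v,v) = 1/m(v)`. -/
theorem mkernel_via_homogeneous {N : ℕ} (hN : 2 ≤ N)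
    (sim : Word N → Word N → Prop) (hsim : Equivalence sim)
    (hlen : ∀ v w : Word N, sim v w → v.length = w.length)
    (m : Fin N → ℝ) (hm : ∀ a, m a ∈ Set.Ioo (0 : ℝ) 1)
    (hm1 : ∑ a, m a = 1) (hB2 : B2 sim m) :
    (∀ v w : Word N, v ≠ w →
      mkernel sim m v w =
        mkernel sim (fun _ : Fin N => (N : ℝ)⁻¹) v w * (Rnum sim v : ℝ) *
          ((N : ℝ) ^ v.length)⁻¹ / massCl sim m v) ∧
    (∀ v : Word N, mkernel sim m v v = 1 / mW m v) := by
  have hm0 : ∀ a, 0 < m a := fun a => (hm a).1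
  have hN0 : (0 : ℝ) < N := by exact_mod_cast (by omega : 0 < N)
  have hh0 : ∀ a : Fin N, 0 < (fun _ : Fin N => (N : ℝ)⁻¹) a := fun _ => inv_pos.2 hN0
  have hBh : B2 sim (fun _ : Fin N => (N : ℝ)⁻¹) := by
    intro w
    left
    intro w' hw
    rw [mW_hom, mW_hom, hlen _ _ hw]
  refine ⟨fun v w hvw => ?_, fun v => ?_⟩
  · by_cases h : v.length < w.length
    · rw [mkernel_qn hsim hlen hm0 hB2 v w h, mkernel_qn hsim hlen hh0 hBh v w h]
      have hM : massCl sim (fun _ : Fin N => (N : ℝ)⁻¹) v =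
          (Rnum sim v : ℝ) * ((N : ℝ) ^ v.length)⁻¹ := by
        rw [massCl_eq hlen, Rnum_eq hlen, ← nsmul_eq_mul, ← Finset.sum_const]
        refine Finset.sum_congr rfl fun u hu => ?_
        have hu' : sim u v := by simpa using hu
        rw [mW_hom, hlen _ _ hu']
      have h2 := (massCl_pos hsim hlen hh0 v).ne'
      rw [mul_assoc, ← hM, div_mul_cancel₀ _ h2]
    · have h0 : w.length - v.length = 0 := by omega
      simp [mkernel, green, h0, pn, Ne.symm hvw]
  · unfold mkernel green
    rw [pn_root hsim hlen hm0 _ v (by simp)]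
    simp [pn]

end Martin
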